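/- Let F be an iterated function system on ℝ^d with uniform contraction ratio λ ∈ (0,1) and uniform rotation U, with Garsia entropy h_F and splitting rate M_F. For n ∈ ℕ let μ_n be the law of ∑_{j=0}^{n−1} λ^j U^j X_j, where X_0, X_1, … are the i.i.d. digit random variables of F. Then for every M > M_F there exists c > 0 such that for all n ∈ ℕ: H(μ_n * n_1) − H(μ_n * n_{M^{−2n}}) < (d·log M − h_F)·n + c. -/

import Mathlib

open MeasureTheory Real

/-- An iterated function system on `ℝ^d` with uniform contraction ratio and uniform rotation:
maps `S_i (x) = λ U x + a_i` with weights `p_i > 0`. -/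
structure UIFS (d : ℕ) where
  m : ℕ
  hm : 0 < m
  lam : ℝ
  hlam : lam ∈ Set.Ioo (0 : ℝ) 1
  U : EuclideanSpace ℝ (Fin d) ≃ₗᵢ[ℝ] EuclideanSpace ℝ (Fin d)
  a : Fin m → EuclideanSpace ℝ (Fin d)
  p : Fin m → ℝ
  hp : ∀ i, 0 < p i
  hsum : ∑ i, p i = 1

namespace UIFS

variable {d : ℕ} (F : UIFS d)

/-- The map `S_i : x ↦ λ U x + a_i`. -/
noncomputable def S (i : Fin F.m) (x : EuclideanSpace ℝ (Fin d)) : EuclideanSpace ℝ (Fin d) :=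
  F.lam • F.U x + F.a i

/-- `S_{j 0} ∘ ⋯ ∘ S_{j (k-1)} (0) = ∑_t λ^t U^t a_{j t}`. -/
noncomputable def pt {k : ℕ} (j : Fin k → Fin F.m) : EuclideanSpace ℝ (Fin d) :=
  ∑ t : Fin k, F.lam ^ (t : ℕ) • (F.U ^ (t : ℕ)) (F.a (j t))

/-- The `k`-step support `V_{F,k}`. -/
noncomputable def V (k : ℕ) : Set (EuclideanSpace ℝ (Fin d)) :=
  Set.range (fun j : Fin k → Fin F.m => F.pt j)

/-- The separation `Δ_{F,k}` of `F` after `k` steps. -/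
noncomputable def sep (k : ℕ) : ℝ :=
  sInf {e : ℝ | ∃ x ∈ F.V k, ∃ y ∈ F.V k, x ≠ y ∧ e = dist x y}

/-- The splitting rate `M_F = limsup_k Δ_{F,k}^{-1/k}` (as an extended real). -/
noncomputable def splittingRate : ENNReal :=
  Filter.limsup (fun k : ℕ => ENNReal.ofReal (F.sep k) ^ (-(1 : ℝ) / k)) Filter.atTop

/-- The probability that the `k`-step random point equals `x`. -/
noncomputable def weight (k : ℕ) (x : EuclideanSpace ℝ (Fin d)) : ℝ :=
  letI := Classical.decEq (EuclideanSpace ℝ (Fin d))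
  ∑ j : Fin k → Fin F.m, if F.pt j = x then ∏ t, F.p (j t) else 0

/-- The Shannon entropy `h_{F,k} = H(∑_{t<k} λ^t U^t X_t)`. -/
noncomputable def Hk (k : ℕ) : ℝ :=
  letI := Classical.decEq (EuclideanSpace ℝ (Fin d))
  ∑ x ∈ Finset.image (fun j : Fin k → Fin F.m => F.pt j) Finset.univ,
    Real.negMulLog (F.weight k x)

/-- The Garsia entropy `h_F = liminf_k h_{F,k}/k`. -/
noncomputable def garsiaEntropy : ℝ :=
  Filter.liminf (fun k : ℕ => F.Hk k / k) Filter.atTop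

end UIFS


/-- Density of the centered Gaussian on `ℝ^d` with covariance matrix `y • I`. -/
noncomputable def gaussD (d : ℕ) (y : ℝ) (x : EuclideanSpace ℝ (Fin d)) : ℝ :=
  (2 * Real.pi * y) ^ (-(d : ℝ) / 2) * Real.exp (-‖x‖ ^ 2 / (2 * y))

/-- The differential entropy `H(μ * n_y) = ∫ -f log f` where `f` is the density of `μ * n_y`. -/
noncomputable def entG (d : ℕ) (μ : Measure (EuclideanSpace ℝ (Fin d))) (y : ℝ) : ℝ :=
  ∫ x, Real.negMulLog (∫ z, gaussD d y (x - z) ∂μ)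

/-- The law `μ_n` of `∑_{j<n} λ^j U^j X_j`. -/
noncomputable def UIFS.lawn {d : ℕ} (F : UIFS d) (n : ℕ) : Measure (EuclideanSpace ℝ (Fin d)) :=
  ∑ j : Fin n → Fin F.m, ENNReal.ofReal (∏ t, F.p (j t)) • Measure.dirac (F.pt j)

/-!
Eventually in `n`, distinct atoms of `μ_n` are at distance at least `r = M ^ (-n)`. Comparing
Gaussians centred at the atoms with the volumes of disjoint balls of radius `r / 2`, these Gaussians
of variance `r ^ 2` have total density at most `C * r ^ (-d)` everywhere. Hence, by concavity of
`t ↦ -t * log t`, blurring `μ_n` at scale `r` gives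
`H(μ_n * n_{r ^ 2}) ≥ H(μ_n) + d * log r - log C = H(μ_n) - d * n * log M - log C`.
By independence `H(μ_n)` is subadditive in `n`, so `H(μ_n) ≥ h_F * n` by Fekete's lemma. At scale
`1` all `μ_n` live in one ball, so the densities of `μ_n * n_1` lie below one common Gaussian and
their entropies are bounded above. The finitely many remaining `n` are absorbed in `c`.
-/

section ImageEntropy

variable {α β γ δ : Type*} [Fintype α] [DecidableEq β] {p : α → ℝ}

/-- The point masses of the image of a finite weight vector `p` under `f`: the law of `f` when `p`
is a probability vector. -/
def fiberMass (p : α → ℝ) (f : α → β) (y : β) : ℝ :=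
  ∑ a with f a = y, p a

/-- The Shannon entropy of the image of a finite weight vector `p` under `f`. -/
noncomputable def imageEntropy (p : α → ℝ) (f : α → β) : ℝ :=
  ∑ y ∈ Finset.univ.image f, negMulLog (fiberMass p f y)

lemma sum_image_fiberMass_mul (p : α → ℝ) (f : α → β) (φ : β → ℝ) :
    ∑ y ∈ Finset.univ.image f, fiberMass p f y * φ y = ∑ a, p a * φ (f a) := by
  refine Finset.sum_image' _ fun a _ => ?_
  rw [fiberMass, Finset.sum_mul]
  refine Finset.sum_congr rfl fun b hb => ?_
  rw [(Finset.mem_filter.1 hb).2]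

lemma sum_image_fiberMass (p : α → ℝ) (f : α → β) :
    ∑ y ∈ Finset.univ.image f, fiberMass p f y = ∑ a, p a := by
  simpa only [mul_one] using sum_image_fiberMass_mul p f fun _ => 1

lemma fiberMass_nonneg (hp : ∀ a, 0 ≤ p a) (f : α → β) (y : β) : 0 ≤ fiberMass p f y :=
  Finset.sum_nonneg fun a _ => hp a

lemma fiberMass_le_sum (hp : ∀ a, 0 ≤ p a) (f : α → β) (y : β) : fiberMass p f y ≤ ∑ a, p a :=
  Finset.sum_le_univ_sum_of_nonneg hp

lemma le_fiberMass (hp : ∀ a, 0 ≤ p a) (f : α → β) (a : α) : p a ≤ fiberMass p f (f a) :=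
  Finset.single_le_sum (fun b _ => hp b) (Finset.mem_filter.2 ⟨Finset.mem_univ a, rfl⟩)

lemma fiberMass_le_fiberMass_comp [DecidableEq γ] (hp : ∀ a, 0 ≤ p a) (f : α → β) (h : β → γ)
    (y : β) : fiberMass p f y ≤ fiberMass p (h ∘ f) (h y) :=
  Finset.sum_le_sum_of_subset_of_nonneg
    (Finset.monotone_filter_right _ fun _ _ hy => congrArg h hy) fun a _ _ => hp a

lemma fiberMass_prodMap [Fintype γ] [DecidableEq δ] (p : α → ℝ) (q : γ → ℝ) (f : α → β)
    (g : γ → δ) (y : β) (z : δ) :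
    fiberMass (fun x : α × γ => p x.1 * q x.2) (Prod.map f g) (y, z) =
      fiberMass p f y * fiberMass q g z := by
  simp only [fiberMass, Finset.sum_mul_sum, ← Finset.sum_product', ← Finset.filter_product,
    Finset.univ_product_univ, Prod.map_apply', Prod.mk.injEq]

lemma fiberMass_comp_equiv [Fintype γ] (p : α → ℝ) (f : α → β) (e : γ ≃ α) (y : β) :
    fiberMass (p ∘ e) (f ∘ e) y = fiberMass p f y := by
  simp only [fiberMass, Finset.sum_filter, Function.comp_apply]
  exact e.sum_comp fun a => if f a = y then p a else 0

lemma imageEntropy_eq_sum (p : α → ℝ) (f : α → β) :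
    imageEntropy p f = ∑ a, p a * -log (fiberMass p f (f a)) := by
  rw [← sum_image_fiberMass_mul p f fun y => -log (fiberMass p f y)]
  exact Finset.sum_congr rfl fun y _ => by rw [negMulLog, neg_mul_comm]

lemma imageEntropy_nonneg (hp : ∀ a, 0 ≤ p a) (hp_sum : ∑ a, p a = 1) (f : α → β) :
    0 ≤ imageEntropy p f :=
  Finset.sum_nonneg fun y _ =>
    negMulLog_nonneg (fiberMass_nonneg hp f y) (hp_sum ▸ fiberMass_le_sum hp f y)

lemma imageEntropy_comp_equiv [Fintype γ] (p : α → ℝ) (f : α → β) (e : γ ≃ α) :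
    imageEntropy (p ∘ e) (f ∘ e) = imageEntropy p f := by
  simp only [imageEntropy_eq_sum, fiberMass_comp_equiv, Function.comp_apply]
  exact e.sum_comp fun a => p a * -log (fiberMass p f (f a))

theorem imageEntropy_comp_le [DecidableEq γ] (hp : ∀ a, 0 ≤ p a) (f : α → β) (h : β → γ) :
    imageEntropy p (h ∘ f) ≤ imageEntropy p f := by
  simp only [imageEntropy_eq_sum]
  refine Finset.sum_le_sum fun a _ => ?_
  rcases (hp a).eq_or_lt with ha | ha
  · simp only [← ha, zero_mul, le_refl]
  · have hf : 0 < fiberMass p f (f a) := ha.trans_le (le_fiberMass hp f a)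
    gcongr
    exact fiberMass_le_fiberMass_comp hp f h (f a)

theorem imageEntropy_prodMap [Fintype γ] [DecidableEq δ] {q : γ → ℝ} (hp : ∑ a, p a = 1)
    (hq : ∑ c, q c = 1) (f : α → β) (g : γ → δ) :
    imageEntropy (fun x : α × γ => p x.1 * q x.2) (Prod.map f g) =
      imageEntropy p f + imageEntropy q g := by
  have himage : Finset.univ.image (Prod.map f g) =
      Finset.univ.image f ×ˢ Finset.univ.image g := by
    rw [← Finset.univ_product_univ, Finset.prodMap_image_product]
  simp only [imageEntropy, himage, Finset.sum_product, fiberMass_prodMap, negMulLog_mul,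
    Finset.sum_add_distrib, ← Finset.mul_sum, ← Finset.sum_mul, sum_image_fiberMass, hp, hq,
    one_mul]

end ImageEntropy

section MixtureEntropy

/-- Jensen's inequality for `negMulLog`, allowing the weights `t i / K` to have total mass less
than one: the missing mass is placed at `0`, where `negMulLog` vanishes. -/
lemma sum_negMulLog_mul_sub_le_negMulLog_sum {ι : Type*} {s : Finset ι} {w t : ι → ℝ} {K : ℝ}
    (hw : ∀ i ∈ s, 0 ≤ w i) (ht : ∀ i ∈ s, 0 ≤ t i) (hK : 0 < K) (hsum : ∑ i ∈ s, t i ≤ K) :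
    ∑ i ∈ s, negMulLog (w i) * t i - log K * ∑ i ∈ s, w i * t i ≤
      negMulLog (∑ i ∈ s, w i * t i) := by
  have hmass : 0 ≤ 1 - ∑ i ∈ s, t i / K := by
    rw [← Finset.sum_div, sub_nonneg, div_le_one hK]
    exact hsum
  have hjensen : ∑ i ∈ s, t i / K * negMulLog (w i) ≤ negMulLog (∑ i ∈ s, t i / K * w i) := by
    simpa only [smul_eq_mul, mul_zero, zero_add, negMulLog_zero] using
      concaveOn_negMulLog.map_add_sum_le (fun i hi => div_nonneg (ht i hi) hK.le)
        (sub_add_cancel 1 (∑ i ∈ s, t i / K)) hw hmass (Set.mem_Ici.2 le_rfl)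
  have hscale : ∀ u : ι → ℝ, K * ∑ i ∈ s, t i / K * u i = ∑ i ∈ s, u i * t i := fun u => by
    rw [Finset.mul_sum]
    exact Finset.sum_congr rfl fun i _ => by field_simp
  calc ∑ i ∈ s, negMulLog (w i) * t i - log K * ∑ i ∈ s, w i * t i
      = K * ∑ i ∈ s, t i / K * negMulLog (w i) + negMulLog K * ∑ i ∈ s, t i / K * w i := by
        rw [hscale fun i => negMulLog (w i), ← hscale w, negMulLog]
        ring
    _ ≤ K * negMulLog (∑ i ∈ s, t i / K * w i) + negMulLog K * ∑ i ∈ s, t i / K * w i := by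
        gcongr
    _ = negMulLog (∑ i ∈ s, w i * t i) := by
        rw [← hscale w, mul_comm K (∑ i ∈ s, _), negMulLog_mul]
        ring

theorem sum_negMulLog_sub_log_le_integral_negMulLog {X ι : Type*} [MeasurableSpace X]
    {μ : Measure X} {s : Finset ι} {w : ι → ℝ} {g : ι → X → ℝ} {K : ℝ}
    (hw : ∀ i ∈ s, 0 ≤ w i) (hw_sum : ∑ i ∈ s, w i = 1)
    (hg : ∀ i ∈ s, ∀ x, 0 ≤ g i x) (hg_int : ∀ i ∈ s, Integrable (g i) μ)
    (hg_one : ∀ i ∈ s, ∫ x, g i x ∂μ = 1) (hK : 0 < K) (hsum : ∀ x, ∑ i ∈ s, g i x ≤ K)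
    (hmix : Integrable (fun x => negMulLog (∑ i ∈ s, w i * g i x)) μ) :
    ∑ i ∈ s, negMulLog (w i) - log K ≤ ∫ x, negMulLog (∑ i ∈ s, w i * g i x) ∂μ := by
  have hint : ∀ c : ι → ℝ, Integrable (fun x => ∑ i ∈ s, c i * g i x) μ := fun c =>
    integrable_finsetSum _ fun i hi => (hg_int i hi).const_mul (c i)
  have hintegral : ∀ c : ι → ℝ, ∫ x, ∑ i ∈ s, c i * g i x ∂μ = ∑ i ∈ s, c i := fun c => by
    rw [integral_finsetSum _ fun i hi => (hg_int i hi).const_mul (c i)]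
    exact Finset.sum_congr rfl fun i hi => by rw [integral_const_mul, hg_one i hi, mul_one]
  calc ∑ i ∈ s, negMulLog (w i) - log K
      = ∫ x, (∑ i ∈ s, negMulLog (w i) * g i x - log K * ∑ i ∈ s, w i * g i x) ∂μ := by
        rw [integral_sub (hint _) ((hint w).const_mul _), integral_const_mul, hintegral,
          hintegral, hw_sum, mul_one]
    _ ≤ ∫ x, negMulLog (∑ i ∈ s, w i * g i x) ∂μ :=
        integral_mono ((hint _).sub ((hint w).const_mul _)) hmix fun x =>
          sum_negMulLog_mul_sub_le_negMulLog_sum hw (fun i hi => hg i hi x) hK (hsum x)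

end MixtureEntropy

section NegMulLogIntegral

lemma abs_negMulLog_le_sqrt_add_sq {t : ℝ} (ht : 0 ≤ t) : |negMulLog t| ≤ 2 * √t + t ^ 2 := by
  have hupper : negMulLog t ≤ 2 * √t := by
    rcases ht.eq_or_lt with rfl | ht'
    · simp
    · have hlog : -log t ≤ 2 * (√t)⁻¹ := by
        have := log_le_self (inv_nonneg.2 (sqrt_nonneg t))
        rw [log_inv, log_sqrt ht] at this
        linarith
      calc negMulLog t = t * -log t := by rw [negMulLog, neg_mul_comm]
        _ ≤ t * (2 * (√t)⁻¹) := by gcongr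
        _ = 2 * √t := by rw [mul_left_comm, ← div_eq_mul_inv, div_sqrt]
  have hlower : -t ^ 2 ≤ negMulLog t := by
    rw [negMulLog, neg_mul, neg_le_neg_iff, sq]
    exact mul_le_mul_of_nonneg_left (log_le_self ht) ht
  rw [abs_le]
  constructor <;> linarith [sqrt_nonneg t, sq_nonneg t]

lemma abs_negMulLog_le_of_le {X : Type*} {f g : X → ℝ} (hf : 0 ≤ f) (hfg : f ≤ g) (x : X) :
    |negMulLog (f x)| ≤ 2 * √(g x) + g x ^ 2 := by
  have h0 := hf x
  have hle := hfg x
  exact (abs_negMulLog_le_sqrt_add_sq h0).trans (by gcongr)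

variable {X : Type*} [MeasurableSpace X] {μ : Measure X} {f g : X → ℝ}

lemma integrable_negMulLog_of_le (hf_meas : AEStronglyMeasurable f μ) (hf : 0 ≤ f) (hfg : f ≤ g)
    (hg_sqrt : Integrable (fun x => √(g x)) μ) (hg_sq : Integrable (fun x => g x ^ 2) μ) :
    Integrable (fun x => negMulLog (f x)) μ :=
  ((hg_sqrt.const_mul 2).add hg_sq).mono'
    (continuous_negMulLog.comp_aestronglyMeasurable hf_meas)
    (.of_forall (abs_negMulLog_le_of_le hf hfg))

lemma integral_negMulLog_le_of_le (hf_meas : AEStronglyMeasurable f μ) (hf : 0 ≤ f) (hfg : f ≤ g)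
    (hg_sqrt : Integrable (fun x => √(g x)) μ) (hg_sq : Integrable (fun x => g x ^ 2) μ) :
    ∫ x, negMulLog (f x) ∂μ ≤ ∫ x, (2 * √(g x) + g x ^ 2) ∂μ :=
  integral_mono (integrable_negMulLog_of_le hf_meas hf hfg hg_sqrt hg_sq)
    ((hg_sqrt.const_mul 2).add hg_sq)
    fun x => (le_abs_self _).trans (abs_negMulLog_le_of_le hf hfg x)

end NegMulLogIntegral

lemma sum_mul_measureReal_ball_le_integral {X : Type*} [PseudoMetricSpace X] [MeasurableSpace X]
    [OpensMeasurableSpace X] {μ : Measure X} {s : Finset X} {r : ℝ} {c φ : X → ℝ}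
    (hs : (s : Set X).Pairwise fun v w => r ≤ dist v w) (hφ : 0 ≤ φ) (hφ_int : Integrable φ μ)
    (hμ : ∀ v ∈ s, μ (Metric.ball v (r / 2)) ≠ ⊤)
    (hc : ∀ v ∈ s, ∀ z ∈ Metric.ball v (r / 2), c v ≤ φ z) :
    ∑ v ∈ s, c v * μ.real (Metric.ball v (r / 2)) ≤ ∫ z, φ z ∂μ := by
  have hdisj : (s : Set X).Pairwise (Function.onFun Disjoint fun v => Metric.ball v (r / 2)) :=
    fun v hv w hw hvw => Metric.ball_disjoint_ball ((add_halves r).trans_le (hs hv hw hvw))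
  calc ∑ v ∈ s, c v * μ.real (Metric.ball v (r / 2))
      ≤ ∑ v ∈ s, ∫ z in Metric.ball v (r / 2), φ z ∂μ := Finset.sum_le_sum fun v hv =>
        setIntegral_ge_of_const_le_real measurableSet_ball (hμ v hv) (hc v hv)
          hφ_int.integrableOn
    _ = ∫ z in ⋃ v ∈ s, Metric.ball v (r / 2), φ z ∂μ :=
        (integral_biUnion_finset s (fun _ _ => measurableSet_ball) hdisj
          fun _ _ => hφ_int.integrableOn).symm
    _ ≤ ∫ z, φ z ∂μ := setIntegral_le_integral hφ_int (.of_forall hφ)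

section Gaussian

variable {d : ℕ} {y : ℝ}

lemma gaussD_eq_const_mul_exp (d : ℕ) (y : ℝ) :
    gaussD d y = fun x => (2 * π * y) ^ (-(d : ℝ) / 2) * exp (-(1 / (2 * y)) * ‖x‖ ^ 2) := by
  funext x
  rw [gaussD]
  ring_nf

lemma continuous_gaussD (d : ℕ) (y : ℝ) : Continuous (gaussD d y) := by
  rw [gaussD_eq_const_mul_exp]
  fun_prop

lemma gaussD_nonneg (hy : 0 ≤ y) (x : EuclideanSpace ℝ (Fin d)) : 0 ≤ gaussD d y x := by
  unfold gaussD
  positivity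

lemma integral_gaussD (hy : 0 < y) : ∫ x, gaussD d y x = 1 := by
  have hb : π / (1 / (2 * y)) = 2 * π * y := by field_simp
  rw [gaussD_eq_const_mul_exp, integral_const_mul,
    GaussianFourier.integral_rexp_neg_mul_sq_norm (by positivity), hb, finrank_euclideanSpace_fin,
    neg_div, rpow_neg (by positivity), inv_mul_cancel₀ (by positivity)]

lemma integrable_gaussD (hy : 0 < y) : Integrable (gaussD d y) :=
  .of_integral_ne_zero (by rw [integral_gaussD hy]; exact one_ne_zero)

lemma integrable_gaussD_sub (hy : 0 < y) (v : EuclideanSpace ℝ (Fin d)) :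
    Integrable fun x => gaussD d y (x - v) :=
  (integrable_gaussD hy).comp_sub_right v

lemma integral_gaussD_sub (hy : 0 < y) (v : EuclideanSpace ℝ (Fin d)) :
    ∫ x, gaussD d y (x - v) = 1 := by
  rw [integral_sub_right_eq_self (gaussD d y), integral_gaussD hy]

lemma integrable_exp_neg_mul_sq_norm {V : Type*} [NormedAddCommGroup V] [InnerProductSpace ℝ V]
    [FiniteDimensional ℝ V] [MeasurableSpace V] [BorelSpace V] {b : ℝ} (hb : 0 < b) :
    Integrable fun v : V => exp (-b * ‖v‖ ^ 2) :=
  .of_integral_ne_zero <| by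
    rw [GaussianFourier.integral_rexp_neg_mul_sq_norm hb]
    positivity

lemma integrable_gaussD_rpow (hy : 0 < y) {s : ℝ} (hs : 0 < s) :
    Integrable fun x => gaussD d y x ^ s := by
  have hpow : (fun x => gaussD d y x ^ s) = fun x =>
      ((2 * π * y) ^ (-(d : ℝ) / 2)) ^ s * exp (-(1 / (2 * y) * s) * ‖x‖ ^ 2) := by
    funext x
    rw [gaussD_eq_const_mul_exp, mul_rpow (by positivity) (exp_pos _).le, ← exp_mul]
    ring_nf
  rw [hpow]
  exact (integrable_exp_neg_mul_sq_norm (by positivity)).const_mul _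

/-- Doubling the variance absorbs the change of argument, since `‖w‖² ≤ 2 ‖u‖² + 2 ‖u - w‖²`. -/
lemma gaussD_le_gaussD_two_mul (hy : 0 < y) (u w : EuclideanSpace ℝ (Fin d)) :
    gaussD d y u ≤ 2 ^ ((d : ℝ) / 2) * exp (‖u - w‖ ^ 2 / (2 * y)) * gaussD d (2 * y) w := by
  have hnorm : ‖w‖ ^ 2 ≤ 2 * (‖u‖ ^ 2 + ‖u - w‖ ^ 2) :=
    calc ‖w‖ ^ 2 = ‖u - (u - w)‖ ^ 2 := by rw [sub_sub_cancel]
      _ ≤ (‖u‖ + ‖u - w‖) ^ 2 := by gcongr; exact norm_sub_le _ _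
      _ ≤ 2 * (‖u‖ ^ 2 + ‖u - w‖ ^ 2) := add_sq_le
  have hexponent : -‖u‖ ^ 2 / (2 * y) ≤
      ‖u - w‖ ^ 2 / (2 * y) + -‖w‖ ^ 2 / (2 * (2 * y)) := by
    rw [← sub_nonneg]
    have : 0 ≤ (2 * (‖u‖ ^ 2 + ‖u - w‖ ^ 2) - ‖w‖ ^ 2) / (2 * (2 * y)) :=
      div_nonneg (sub_nonneg.2 hnorm) (by positivity)
    convert! this using 1
    field
  have hprefactor : (2 * π * (2 * y)) ^ (-(d : ℝ) / 2) * 2 ^ ((d : ℝ) / 2) =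
      (2 * π * y) ^ (-(d : ℝ) / 2) := by
    rw [mul_left_comm, mul_rpow zero_le_two (by positivity), mul_right_comm,
      ← rpow_add two_pos, neg_div, neg_add_cancel, rpow_zero, one_mul]
  calc gaussD d y u
      ≤ (2 * π * y) ^ (-(d : ℝ) / 2) *
          exp (‖u - w‖ ^ 2 / (2 * y) + -‖w‖ ^ 2 / (2 * (2 * y))) := by
        unfold gaussD
        gcongr
    _ = 2 ^ ((d : ℝ) / 2) * exp (‖u - w‖ ^ 2 / (2 * y)) * gaussD d (2 * y) w := by
        rw [← hprefactor, exp_add, gaussD]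
        ring

theorem sum_gaussD_sub_mul_measureReal_ball_le (hy : 0 < y) {r : ℝ}
    {s : Finset (EuclideanSpace ℝ (Fin d))}
    (hs : (s : Set (EuclideanSpace ℝ (Fin d))).Pairwise fun v w => r ≤ dist v w)
    (x : EuclideanSpace ℝ (Fin d)) :
    (∑ v ∈ s, gaussD d y (x - v)) *
        volume.real (Metric.ball (0 : EuclideanSpace ℝ (Fin d)) (r / 2)) ≤
      2 ^ ((d : ℝ) / 2) * exp ((r / 2) ^ 2 / (2 * y)) := by
  set A : ℝ := 2 ^ ((d : ℝ) / 2) * exp ((r / 2) ^ 2 / (2 * y))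
  have hA : 0 ≤ A := by positivity
  have hy2 : 0 < 2 * y := by positivity
  have hlocal : ∀ v ∈ s, ∀ z ∈ Metric.ball v (r / 2),
      gaussD d y (x - v) ≤ A * gaussD d (2 * y) (x - z) := fun v _ z hz => by
    have hdist : ‖x - v - (x - z)‖ ≤ r / 2 := by
      rw [sub_sub_sub_cancel_left, ← dist_eq_norm]
      exact (Metric.mem_ball.1 hz).le
    have := gaussD_nonneg hy2.le (x - z)
    exact (gaussD_le_gaussD_two_mul hy (x - v) (x - z)).trans (by simp only [A]; gcongr)
  calc (∑ v ∈ s, gaussD d y (x - v)) *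
        volume.real (Metric.ball (0 : EuclideanSpace ℝ (Fin d)) (r / 2))
      = ∑ v ∈ s, gaussD d y (x - v) * volume.real (Metric.ball v (r / 2)) := by
        rw [Finset.sum_mul]
        exact Finset.sum_congr rfl fun v _ => by rw [Measure.addHaar_real_ball_center volume v]
    _ ≤ ∫ z, A * gaussD d (2 * y) (x - z) :=
        sum_mul_measureReal_ball_le_integral hs
          (fun z => mul_nonneg hA (gaussD_nonneg hy2.le _))
          (((integrable_gaussD hy2).comp_sub_left x).const_mul A)
          (fun _ _ => measure_ball_lt_top.ne) hlocal
    _ = A := by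
        rw [integral_const_mul, integral_sub_left_eq_self (gaussD d (2 * y)), integral_gaussD hy2,
          mul_one]

/-- The constant `C` for which an `r`-separated set carries, at any point, total Gaussian density
of variance `r ^ 2` at most `C / r ^ d`. -/
noncomputable def gaussPackingConst (d : ℕ) : ℝ :=
  2 ^ ((d : ℝ) / 2) * exp (1 / 8) /
    volume.real (Metric.ball (0 : EuclideanSpace ℝ (Fin d)) (1 / 2))

lemma measureReal_ball_half_pos (d : ℕ) :
    0 < volume.real (Metric.ball (0 : EuclideanSpace ℝ (Fin d)) (1 / 2)) :=
  ENNReal.toReal_pos (Metric.measure_ball_pos _ _ one_half_pos).ne' measure_ball_lt_top.ne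

lemma gaussPackingConst_pos (d : ℕ) : 0 < gaussPackingConst d := by
  have := measureReal_ball_half_pos d
  unfold gaussPackingConst
  positivity

theorem sum_gaussD_sq_sub_le {r : ℝ} (hr : 0 < r) {s : Finset (EuclideanSpace ℝ (Fin d))}
    (hs : (s : Set (EuclideanSpace ℝ (Fin d))).Pairwise fun v w => r ≤ dist v w)
    (x : EuclideanSpace ℝ (Fin d)) :
    ∑ v ∈ s, gaussD d (r ^ 2) (x - v) ≤ gaussPackingConst d / r ^ d := by
  have hvol : volume.real (Metric.ball (0 : EuclideanSpace ℝ (Fin d)) (r / 2)) =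
      volume.real (Metric.ball (0 : EuclideanSpace ℝ (Fin d)) (1 / 2)) * r ^ d := by
    rw [div_eq_mul_one_div, measureReal_def, Measure.addHaar_ball_mul_of_pos _ _ hr,
      ENNReal.toReal_mul, ENNReal.toReal_ofReal (by positivity), finrank_euclideanSpace_fin,
      mul_comm, measureReal_def]
  have hexp : (r / 2) ^ 2 / (2 * r ^ 2) = 1 / 8 := by field
  have hball := measureReal_ball_half_pos d
  rw [gaussPackingConst, div_div, le_div_iff₀ (by positivity), ← hvol, ← hexp]
  exact sum_gaussD_sub_mul_measureReal_ball_le (by positivity) hs x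

end Gaussian

section GaussConv

variable {d : ℕ} {μ : Measure (EuclideanSpace ℝ (Fin d))} {y R : ℝ}

/-- The density of `μ * n_y`, the convolution of `μ` with the centered Gaussian of
covariance `y • I`. -/
noncomputable def gaussConv (d : ℕ) (μ : Measure (EuclideanSpace ℝ (Fin d))) (y : ℝ)
    (x : EuclideanSpace ℝ (Fin d)) : ℝ :=
  ∫ z, gaussD d y (x - z) ∂μ

lemma entG_eq_integral_gaussConv (d : ℕ) (μ : Measure (EuclideanSpace ℝ (Fin d))) (y : ℝ) :
    entG d μ y = ∫ x, negMulLog (gaussConv d μ y x) := rfl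

lemma gaussConv_nonneg (hy : 0 ≤ y) : 0 ≤ gaussConv d μ y :=
  fun _ => integral_nonneg fun _ => gaussD_nonneg hy _

lemma stronglyMeasurable_gaussConv [SFinite μ] : StronglyMeasurable (gaussConv d μ y) := by
  have hcont : Continuous fun p : EuclideanSpace ℝ (Fin d) × EuclideanSpace ℝ (Fin d) =>
      gaussD d y (p.1 - p.2) := (continuous_gaussD d y).comp continuous_sub
  exact hcont.stronglyMeasurable.integral_prod_right

/-- A Gaussian density dominating `gaussConv d μ y` for every probability measure `μ` carried by
the ball of radius `R` around the origin. -/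
noncomputable def gaussMajorant (d : ℕ) (R y : ℝ) (x : EuclideanSpace ℝ (Fin d)) : ℝ :=
  2 ^ ((d : ℝ) / 2) * exp (R ^ 2 / (2 * y)) * gaussD d (2 * y) x

lemma gaussConv_le_gaussMajorant [IsProbabilityMeasure μ] (hy : 0 < y)
    (hμ : ∀ᵐ z ∂μ, ‖z‖ ≤ R) : gaussConv d μ y ≤ gaussMajorant d R y := fun x => by
  have hbound : ∀ᵐ z ∂μ, gaussD d y (x - z) ≤ gaussMajorant d R y x := by
    filter_upwards [hμ] with z hz
    have hshift : ‖x - z - x‖ ≤ R := by rwa [sub_sub_cancel_left, norm_neg]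
    have := gaussD_nonneg (mul_pos two_pos hy).le x
    exact (gaussD_le_gaussD_two_mul hy (x - z) x).trans (by unfold gaussMajorant; gcongr)
  calc gaussConv d μ y x ≤ ∫ _, gaussMajorant d R y x ∂μ :=
        integral_mono_of_nonneg (.of_forall fun _ => gaussD_nonneg hy.le _)
          (integrable_const _) hbound
    _ = gaussMajorant d R y x := by rw [integral_const, probReal_univ, one_smul]

lemma integrable_sqrt_gaussMajorant (hy : 0 < y) :
    Integrable fun x => √(gaussMajorant d R y x) := by
  simp only [gaussMajorant, sqrt_eq_rpow]
  have hsqrt := (integrable_gaussD_rpow (d := d) (mul_pos two_pos hy) one_half_pos).const_mul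
    ((2 ^ ((d : ℝ) / 2) * exp (R ^ 2 / (2 * y))) ^ (1 / 2 : ℝ))
  refine hsqrt.congr (.of_forall fun x => ?_)
  exact (mul_rpow (by positivity) (gaussD_nonneg (by positivity) x)).symm

lemma integrable_gaussMajorant_sq (hy : 0 < y) :
    Integrable fun x => gaussMajorant d R y x ^ 2 := by
  simp only [gaussMajorant, mul_pow _ (gaussD d (2 * y) _), ← rpow_two]
  exact (integrable_gaussD_rpow (mul_pos two_pos hy) two_pos).const_mul _

theorem integrable_negMulLog_gaussConv [IsProbabilityMeasure μ] (hy : 0 < y)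
    (hμ : ∀ᵐ z ∂μ, ‖z‖ ≤ R) : Integrable fun x => negMulLog (gaussConv d μ y x) :=
  integrable_negMulLog_of_le stronglyMeasurable_gaussConv.aestronglyMeasurable
    (gaussConv_nonneg hy.le) (gaussConv_le_gaussMajorant hy hμ) (integrable_sqrt_gaussMajorant hy)
    (integrable_gaussMajorant_sq hy)

theorem entG_le_of_ae_norm_le [IsProbabilityMeasure μ] (hy : 0 < y) (hμ : ∀ᵐ z ∂μ, ‖z‖ ≤ R) :
    entG d μ y ≤ ∫ x, (2 * √(gaussMajorant d R y x) + gaussMajorant d R y x ^ 2) :=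
  integral_negMulLog_le_of_le stronglyMeasurable_gaussConv.aestronglyMeasurable
    (gaussConv_nonneg hy.le) (gaussConv_le_gaussMajorant hy hμ) (integrable_sqrt_gaussMajorant hy)
    (integrable_gaussMajorant_sq hy)

end GaussConv

lemma inv_pow_lt_of_rpow_neg_one_div_lt {x m : ENNReal} {n : ℕ} (hn : n ≠ 0)
    (h : x ^ (-(1 : ℝ) / n) < m) : (m ^ n)⁻¹ < x := by
  have hpow : (x ^ (-(1 : ℝ) / n)) ^ n = x⁻¹ := by
    rw [← ENNReal.rpow_natCast, ← ENNReal.rpow_mul, div_mul_cancel₀ _ (Nat.cast_ne_zero.2 hn),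
      ENNReal.rpow_neg_one]
  rw [ENNReal.inv_lt_iff_inv_lt, ← hpow]
  exact ENNReal.pow_lt_pow_left hn h

namespace UIFS

variable {d : ℕ} (F : UIFS d)

/-- The probability of a word under the i.i.d. choice of digits. -/
noncomputable def wordProb {k : ℕ} (j : Fin k → Fin F.m) : ℝ :=
  ∏ t, F.p (j t)

lemma wordProb_nonneg {k : ℕ} (j : Fin k → Fin F.m) : 0 ≤ F.wordProb j :=
  Finset.prod_nonneg fun t _ => (F.hp (j t)).le

lemma sum_wordProb (k : ℕ) : ∑ j : Fin k → Fin F.m, F.wordProb j = 1 := by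
  simp only [wordProb, ← Fintype.sum_pow, F.hsum, one_pow]

lemma wordProb_append {a b : ℕ} (i : Fin a → Fin F.m) (j : Fin b → Fin F.m) :
    F.wordProb (Fin.append i j) = F.wordProb i * F.wordProb j := by
  simp only [wordProb, Fin.prod_univ_add, Fin.append_left, Fin.append_right]

lemma pt_append {a b : ℕ} (i : Fin a → Fin F.m) (j : Fin b → Fin F.m) :
    F.pt (Fin.append i j) = F.pt i + F.lam ^ a • (F.U ^ a) (F.pt j) := by
  simp only [pt, Fin.sum_univ_add, Fin.append_left, Fin.append_right, Fin.val_castAdd,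
    Fin.val_natAdd, map_sum, map_smul, Finset.smul_sum, smul_smul, pow_add,
    LinearIsometryEquiv.coe_mul, Function.comp_apply]

section Entropy

open scoped Classical in
lemma weight_eq_fiberMass (k : ℕ) :
    F.weight k = fiberMass (F.wordProb (k := k)) F.pt := by
  funext x
  simp only [weight, fiberMass, wordProb, Finset.sum_filter]
  congr!

open scoped Classical in
lemma Hk_eq_imageEntropy (k : ℕ) : F.Hk k = imageEntropy (F.wordProb (k := k)) F.pt := by
  simp only [Hk, imageEntropy, weight_eq_fiberMass]
  congr!

lemma weight_nonneg (k : ℕ) (x : EuclideanSpace ℝ (Fin d)) : 0 ≤ F.weight k x := by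
  classical
  rw [weight_eq_fiberMass]
  exact fiberMass_nonneg F.wordProb_nonneg F.pt x

lemma Hk_nonneg (k : ℕ) : 0 ≤ F.Hk k := by
  classical
  rw [Hk_eq_imageEntropy]
  exact imageEntropy_nonneg F.wordProb_nonneg (F.sum_wordProb k) F.pt

/-- A word of length `a + b` is a pair of independent words of lengths `a` and `b`, and its point
is a function of the points of these two words. -/
lemma subadditive_Hk : Subadditive F.Hk := fun a b => by
  classical
  let e := Fin.appendEquiv (α := Fin F.m) a b
  let q : (Fin a → Fin F.m) × (Fin b → Fin F.m) → ℝ := fun x => F.wordProb x.1 * F.wordProb x.2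
  let glue : EuclideanSpace ℝ (Fin d) × EuclideanSpace ℝ (Fin d) → EuclideanSpace ℝ (Fin d) :=
    fun x => x.1 + F.lam ^ a • (F.U ^ a) x.2
  have hq : F.wordProb ∘ e = q := funext fun x => F.wordProb_append x.1 x.2
  have hpt : F.pt ∘ e = glue ∘ Prod.map F.pt F.pt := funext fun x => F.pt_append x.1 x.2
  have hq_nonneg : ∀ x, 0 ≤ q x := fun x => mul_nonneg (F.wordProb_nonneg _) (F.wordProb_nonneg _)
  calc F.Hk (a + b) = imageEntropy q (glue ∘ Prod.map F.pt F.pt) := by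
        rw [Hk_eq_imageEntropy, ← imageEntropy_comp_equiv _ _ e, hq, hpt]
    _ ≤ imageEntropy q (Prod.map F.pt F.pt) := imageEntropy_comp_le hq_nonneg _ glue
    _ = F.Hk a + F.Hk b := by
        rw [imageEntropy_prodMap (F.sum_wordProb a) (F.sum_wordProb b), Hk_eq_imageEntropy,
          Hk_eq_imageEntropy]

theorem garsiaEntropy_mul_le_Hk (n : ℕ) : F.garsiaEntropy * n ≤ F.Hk n := by
  rcases Nat.eq_zero_or_pos n with rfl | hn
  · simpa only [Nat.cast_zero, mul_zero] using F.Hk_nonneg 0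
  have hbdd : BddBelow (Set.range fun k : ℕ => F.Hk k / k) :=
    ⟨0, Set.forall_mem_range.2 fun k => div_nonneg (F.Hk_nonneg k) k.cast_nonneg⟩
  have hle : F.garsiaEntropy ≤ F.Hk n / n :=
    (F.subadditive_Hk.tendsto_lim hbdd).liminf_eq.trans_le
      (F.subadditive_Hk.lim_le_div hbdd hn.ne')
  rwa [le_div_iff₀ (Nat.cast_pos.2 hn)] at hle

end Entropy

section Law

instance isProbabilityMeasure_lawn (n : ℕ) : IsProbabilityMeasure (F.lawn n) := by
  have hsum : ∑ j : Fin n → Fin F.m, ENNReal.ofReal (F.wordProb j) = 1 := by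
    rw [← ENNReal.ofReal_sum_of_nonneg fun j _ => F.wordProb_nonneg j, sum_wordProb,
      ENNReal.ofReal_one]
  constructor
  simpa only [lawn, Measure.finsetSum_apply, Measure.smul_apply, measure_univ, smul_eq_mul,
    mul_one] using! hsum

lemma integral_lawn (n : ℕ) (φ : EuclideanSpace ℝ (Fin d) → ℝ) :
    ∫ z, φ z ∂F.lawn n = ∑ j : Fin n → Fin F.m, F.wordProb j * φ (F.pt j) := by
  rw [lawn, integral_finsetSum_measure fun j _ =>
    (integrable_dirac enorm_lt_top).smul_measure ENNReal.ofReal_ne_top]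
  refine Finset.sum_congr rfl fun j _ => ?_
  rw [integral_smul_measure, integral_dirac, smul_eq_mul]
  exact congrArg (· * φ (F.pt j)) (ENNReal.toReal_ofReal (F.wordProb_nonneg j))

/-- The radius `(∑ ‖a_i‖) / (1 - λ)` of a ball around the origin containing every `k`-step
support. -/
noncomputable def radius : ℝ :=
  (∑ i, ‖F.a i‖) * (1 - F.lam)⁻¹

lemma norm_pt_le_radius {k : ℕ} (j : Fin k → Fin F.m) : ‖F.pt j‖ ≤ F.radius := by
  obtain ⟨hlam0, hlam1⟩ := F.hlam
  have hterm : ∀ t : Fin k, ‖F.lam ^ (t : ℕ) • (F.U ^ (t : ℕ)) (F.a (j t))‖ ≤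
      (∑ i, ‖F.a i‖) * F.lam ^ (t : ℕ) := fun t => by
    rw [norm_smul, LinearIsometryEquiv.norm_map, norm_pow, norm_of_nonneg hlam0.le, mul_comm]
    gcongr
    exact Finset.single_le_sum (f := fun i => ‖F.a i‖) (fun _ _ => norm_nonneg _)
      (Finset.mem_univ (j t))
  have hgeom : ∑ t ∈ Finset.range k, F.lam ^ t ≤ (1 - F.lam)⁻¹ := by
    rw [← tsum_geometric_of_lt_one hlam0.le hlam1]
    exact (summable_geometric_of_lt_one hlam0.le hlam1).sum_le_tsum _
      fun t _ => pow_nonneg hlam0.le t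
  calc ‖F.pt j‖ ≤ ∑ t : Fin k, (∑ i, ‖F.a i‖) * F.lam ^ (t : ℕ) :=
        norm_sum_le_of_le _ fun t _ => hterm t
    _ = (∑ i, ‖F.a i‖) * ∑ t ∈ Finset.range k, F.lam ^ t := by
        rw [← Finset.mul_sum, Finset.sum_range]
    _ ≤ F.radius := by unfold radius; gcongr

lemma ae_lawn_norm_le_radius (n : ℕ) : ∀ᵐ z ∂F.lawn n, ‖z‖ ≤ F.radius := by
  refine ae_finsetSum_measure_iff.2 fun j _ => Measure.ae_smul_measure ?_ _
  exact (ae_dirac_iff (measurableSet_le measurable_norm measurable_const)).2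
    (F.norm_pt_le_radius j)

open scoped Classical in
lemma integral_lawn_eq_sum_weight (n : ℕ) (φ : EuclideanSpace ℝ (Fin d) → ℝ) :
    ∫ z, φ z ∂F.lawn n = ∑ v ∈ Finset.univ.image (F.pt (k := n)), F.weight n v * φ v := by
  rw [integral_lawn, weight_eq_fiberMass, sum_image_fiberMass_mul]

end Law

section Separation

variable {F}

lemma sep_le_dist {k : ℕ} {x y : EuclideanSpace ℝ (Fin d)} (hx : x ∈ F.V k) (hy : y ∈ F.V k)
    (hxy : x ≠ y) : F.sep k ≤ dist x y :=
  csInf_le ⟨0, by rintro _ ⟨_, _, _, _, _, rfl⟩; exact dist_nonneg⟩ ⟨x, hx, y, hy, hxy, rfl⟩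

lemma eventually_inv_pow_lt_sep {M : ℝ} (hM : F.splittingRate < ENNReal.ofReal M) :
    ∀ᶠ n in Filter.atTop, (M ^ n)⁻¹ < F.sep n := by
  have hM_pos : 0 < M := ENNReal.ofReal_pos.1 (bot_le.trans_lt hM)
  filter_upwards [Filter.eventually_lt_of_limsup_lt hM, Filter.eventually_ne_atTop 0]
    with n hn hn0
  have hlt := inv_pow_lt_of_rpow_neg_one_div_lt hn0 hn
  rw [← ENNReal.ofReal_pow hM_pos.le, ← ENNReal.ofReal_inv_of_pos (by positivity)] at hlt
  exact (ENNReal.ofReal_lt_ofReal_iff'.1 hlt).1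

end Separation

theorem Hk_add_mul_log_sub_le_entG_lawn {n : ℕ} {r : ℝ} (hr : 0 < r)
    (hV : (F.V n).Pairwise fun v w => r ≤ dist v w) :
    F.Hk n + d * log r - log (gaussPackingConst d) ≤ entG d (F.lawn n) (r ^ 2) := by
  classical
  have hr2 : 0 < r ^ 2 := by positivity
  have hC := gaussPackingConst_pos d
  set s := Finset.univ.image (F.pt (k := n))
  have hs : (s : Set (EuclideanSpace ℝ (Fin d))).Pairwise fun v w => r ≤ dist v w := by
    simpa only [s, Finset.coe_image, Finset.coe_univ, Set.image_univ] using! hV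
  have hweight : ∑ v ∈ s, F.weight n v = 1 := by
    rw [weight_eq_fiberMass, sum_image_fiberMass, sum_wordProb]
  have hdensity : ∀ x, gaussConv d (F.lawn n) (r ^ 2) x =
      ∑ v ∈ s, F.weight n v * gaussD d (r ^ 2) (x - v) := fun x =>
    F.integral_lawn_eq_sum_weight n fun z => gaussD d (r ^ 2) (x - z)
  have hHk : F.Hk n = ∑ v ∈ s, negMulLog (F.weight n v) := by
    rw [Hk]
    congr!
  have hmix := integrable_negMulLog_gaussConv hr2 (F.ae_lawn_norm_le_radius n)
  simp only [hdensity] at hmix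
  calc F.Hk n + d * log r - log (gaussPackingConst d)
      = ∑ v ∈ s, negMulLog (F.weight n v) - log (gaussPackingConst d / r ^ d) := by
        rw [hHk, log_div hC.ne' (by positivity), log_pow]
        ring
    _ ≤ ∫ x, negMulLog (∑ v ∈ s, F.weight n v * gaussD d (r ^ 2) (x - v)) :=
        sum_negMulLog_sub_log_le_integral_negMulLog
          (fun v _ => F.weight_nonneg n v) hweight
          (fun v _ x => gaussD_nonneg hr2.le (x - v)) (fun v _ => integrable_gaussD_sub hr2 v)
          (fun v _ => integral_gaussD_sub hr2 v) (by positivity) (sum_gaussD_sq_sub_le hr hs) hmix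
    _ = entG d (F.lawn n) (r ^ 2) := by simp only [entG_eq_integral_gaussConv, hdensity]

end UIFS

theorem statement15 {d : ℕ} (F : UIFS d) (M : ℝ)
    (hM : F.splittingRate < ENNReal.ofReal M) :
    ∃ c : ℝ, 0 < c ∧ ∀ n : ℕ,
      entG d (F.lawn n) 1 - entG d (F.lawn n) ((M ^ (2 * n))⁻¹) <
        ((d : ℝ) * Real.log M - F.garsiaEntropy) * n + c := by
  have hM_pos : 0 < M := ENNReal.ofReal_pos.1 (bot_le.trans_lt hM)
  let excess : ℕ → ℝ := fun n => entG d (F.lawn n) 1 - entG d (F.lawn n) ((M ^ (2 * n))⁻¹) -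
    ((d : ℝ) * log M - F.garsiaEntropy) * n
  have hexcess : ∀ᶠ n in Filter.atTop, excess n ≤
      (∫ x, (2 * √(gaussMajorant d F.radius 1 x) + gaussMajorant d F.radius 1 x ^ 2)) +
        log (gaussPackingConst d) := by
    filter_upwards [UIFS.eventually_inv_pow_lt_sep hM] with n hn
    have hcoarse := entG_le_of_ae_norm_le one_pos (F.ae_lawn_norm_le_radius n)
    have hfine := F.Hk_add_mul_log_sub_le_entG_lawn (inv_pos.2 (pow_pos hM_pos n))
      fun v hv w hw hvw => hn.le.trans (UIFS.sep_le_dist hv hw hvw)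
    rw [inv_pow, ← pow_mul', log_inv, log_pow] at hfine
    linarith only [hfine, hcoarse, F.garsiaEntropy_mul_le_Hk n]
  obtain ⟨B, hB⟩ := (Filter.isBoundedUnder_of_eventually_le hexcess).bddAbove_range
  refine ⟨max B 0 + 1, by positivity, fun n => ?_⟩
  linarith only [hB (Set.mem_range_self n), le_max_left B 0]
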